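/- For all integers 1 ≤ i ≤ d there exists a constant C(d,i) > 0 such that for every family (n_I) of nonnegative integers indexed by the i-element subsets I of {1, …, d}, there exists an i-element subset I' of {1, …, d} such that μ_{di}(D) ≤ C · q^{−max_I n_I − (d−i) n_{I'}}, where D = {s ∈ M_{d,i}(𝒪) : |c_I(s)| = q^{−n_I} for every i-element subset I} and c_I(s) denotes the i×i minor of s with row set I. -/

import Mathlib

/-!
The set `D` is a union of residue classes modulo `X ^ M` for `M > max_I n_I`, and all residue classes
of integral `d × i` matrices have the same measure `q ^ (-M d i)`. Hence bounding `μ D` amounts to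
counting matrices over the finite ring `R = 𝔽_q[X] / (X ^ M)`.

Let `I₁` minimize `n_I`, with value `m`, and let `I₀` maximize it, with value `N`; the set `I'` of
the theorem is `I₁`. For `s ∈ D` let `A` be the square matrix of the rows `I₁` of `s`. Since its
determinant divides all other minors, Cramer's rule gives `s = t A` with `t` integral, where the rows
`I₁` of `t` form the identity and the `I₀`-minor of `t` has valuation `N - m`
(`exists_mul_of_dvd_minors`). The number of such `s` over `R`, relative to the number
`q ^ (M d i)` of all matrices, is controlled by three estimates, all up to constants depending only
on `i` and `q`:

* the matrices `A` with `X ^ m ∣ det A` have density at most `q ^ (-m)`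
  (`TruncDVR.card_det_dvd_le`);
* the normalized matrices `t` whose `I₀`-minor is divisible by `X ^ (N - m)` have density at most
  `q ^ (-(N - m))` (`TruncDVR.card_normalized_le`);
* for fixed `A`, the map `t ↦ t A` is at least `q ^ ((d - i) m)` to one, since `x ↦ x A` has at
  least `q ^ m` elements in its kernel (`TruncDVR.pow_le_card_ker`) and each of the `d - i` rows of
  `t` outside `I₁` can be changed by such an element (`TruncDVR.card_image_mul_le`).

The product of the three savings is `q ^ (-N - (d - i) m)`, which is `TruncDVR.card_le`.
-/

open MeasureTheory
open scoped Classical ENNReal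

noncomputable section

variable (F : Type*) [Field F] [Fintype F]

/-- The absolute value `|x| = q^{-v(x)}` on the Laurent series field `K = 𝔽_q((X))`,
where `v` is the `X`-adic valuation (the order of vanishing). -/
def absv (x : LaurentSeries F) : ℝ :=
  if x = 0 then 0 else (Fintype.card F : ℝ) ^ (-(HahnSeries.order x))

instance : MeasurableSpace (LaurentSeries F) := borel _

instance (m n : ℕ) : MeasurableSpace (Matrix (Fin m) (Fin n) (LaurentSeries F)) := borel _

instance (d : ℕ) : MeasurableSpace (Fin d → LaurentSeries F) := borel _

/-- the set of matrices with all entries in the valuation ring `𝒪 = 𝔽_q[[X]] = {x : |x| ≤ 1}`. -/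
def intMat (m n : ℕ) : Set (Matrix (Fin m) (Fin n) (LaurentSeries F)) :=
  {s | ∀ k l, absv F (s k l) ≤ 1}

/-- sup norm of a vector in `K^d` -/
def supNorm {d : ℕ} (v : Fin d → LaurentSeries F) : ℝ := ⨆ j, absv F (v j)

/-- the `i × i` minor of a `d × i` matrix with row set `I`. -/
def minor {d i : ℕ} (s : Matrix (Fin d) (Fin i) (LaurentSeries F))
    (I : {I : Finset (Fin d) // I.card = i}) : LaurentSeries F :=
  (s.submatrix (fun a : Fin i => ((I.1.orderIsoOfFin I.2 a : {x // x ∈ I.1}) : Fin d)) id).det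

/-- The norm `‖s₁ ∧ ⋯ ∧ s_i‖` of the wedge product of the columns of a `d × i` matrix:
the maximum of the absolute values of its `i × i` minors. -/
def wedgeNorm {d i : ℕ} (s : Matrix (Fin d) (Fin i) (LaurentSeries F)) : ℝ :=
  ⨆ I : {I : Finset (Fin d) // I.card = i}, absv F (minor F s I)

/-- `X ∈ K`, the uniformizer. -/
def Xu : LaurentSeries F := HahnSeries.single 1 1

/-- the diagonal element `g_t = diag(X^{-nt} I_m, X^{mt} I_n)`. -/
def gMat (m n : ℕ) (t : ℤ) : Matrix (Fin (m + n)) (Fin (m + n)) (LaurentSeries F) :=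
  Matrix.reindex finSumFinEquiv finSumFinEquiv
    (Matrix.fromBlocks ((Xu F ^ (-(n * t))) • (1 : Matrix (Fin m) (Fin m) (LaurentSeries F))) 0 0
      ((Xu F ^ ((m : ℤ) * t)) • (1 : Matrix (Fin n) (Fin n) (LaurentSeries F))))

/-- the upper block-unipotent element `u_s` with blocks `(I_m, s; 0, I_n)`. -/
def uMat {m n : ℕ} (s : Matrix (Fin m) (Fin n) (LaurentSeries F)) :
    Matrix (Fin (m + n)) (Fin (m + n)) (LaurentSeries F) :=
  Matrix.reindex finSumFinEquiv finSumFinEquiv (Matrix.fromBlocks 1 s 0 1)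

/-- the exponent `β_i = m/i` for `i ≤ m` and `n/(m+n-i)` for `i > m`. -/
def betaE (m n i : ℕ) : ℝ := if i ≤ m then (m : ℝ) / i else (n : ℝ) / ((m + n - i : ℕ) : ℝ)

end

/-! ### Counting matrices over a truncated discrete valuation ring -/

/-- `R` behaves like the truncation `𝒪 / π ^ M` of a discrete valuation ring `𝒪` with uniformizer
`π` and residue field of size `q`: `π ^ M = 0`, every element is a unit times a power of `π`, and
the ideal `(π ^ j)` has `q ^ (M - j)` elements. Only these counting properties are used. -/
structure TruncDVR (R : Type*) [CommRing R] (π : R) (M q : ℕ) : Prop where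
  two_le : 2 ≤ q
  pow_eq_zero : π ^ M = 0
  exists_unit : ∀ r : R, ∃ u : Rˣ, ∃ j ≤ M, r = u * π ^ j
  card_dvd : ∀ j ≤ M, Nat.card {x : R // π ^ j ∣ x} = q ^ (M - j)

namespace TruncDVR
variable {R : Type*} [CommRing R] {π : R} {M q : ℕ}

lemma card_eq (h : TruncDVR R π M q) : Nat.card R = q ^ M := by
  have h0 := h.card_dvd 0 (Nat.zero_le _)
  rw [Nat.sub_zero] at h0
  rw [← h0]
  exact (Nat.card_congr (Equiv.subtypeUnivEquiv (by simp))).symm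

lemma le_of_pow_dvd [Finite R] (h : TruncDVR R π M q) {n e : ℕ} (hn : n ≤ M)
    (hd : π ^ n ∣ π ^ e) : n ≤ e := by
  by_contra! hlt
  have hle : Nat.card {x : R // π ^ e ∣ x} ≤ Nat.card {x : R // π ^ n ∣ x} :=
    Nat.card_le_card_of_injective (fun x => ⟨x.1, hd.trans x.2⟩)
      (fun x y hxy => Subtype.ext (by simpa using hxy))
  rw [h.card_dvd _ hn, h.card_dvd _ (by omega)] at hle
  have := (Nat.pow_le_pow_iff_right h.two_le).1 hle
  omega

lemma dvd_of_pow_dvd_mul [Finite R] (h : TruncDVR R π M q) {n j : ℕ} {y : R} (hn : n ≤ M)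
    (hd : π ^ n ∣ π ^ j * y) : π ^ (n - j) ∣ y := by
  obtain ⟨u, e, -, rfl⟩ := h.exists_unit y
  have h1 : π ^ n ∣ π ^ (j + e) := by
    rw [mul_left_comm, ← pow_add] at hd
    exact (u.isUnit.dvd_mul_left).1 hd
  have := h.le_of_pow_dvd hn h1
  exact Dvd.dvd.mul_left (pow_dvd_pow _ (by omega)) _

lemma dvd_of_mul_eq_zero [Finite R] (h : TruncDVR R π M q) {j : ℕ} {y : R}
    (hd : π ^ j * y = 0) : π ^ (M - j) ∣ y :=
  h.dvd_of_pow_dvd_mul le_rfl (by rw [hd]; exact dvd_zero _)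

/-- Every row vector is a power of `π` times the first row of an invertible matrix: divide by an
entry of least valuation, and complete the quotient, which has a unit entry. -/
lemma exists_unimodular (h : TruncDVR R π M q) {k : ℕ} (r : Fin (k + 1) → R) :
    ∃ j ≤ M, ∃ W : Matrix (Fin (k + 1)) (Fin (k + 1)) R, IsUnit W.det ∧ r = π ^ j • W 0 := by
  choose u e he hr using fun l => h.exists_unit (r l)
  obtain ⟨p, -, hp⟩ := Finset.exists_min_image Finset.univ e ⟨0, Finset.mem_univ _⟩
  let c : Fin (k + 1) → R := fun l => u l * π ^ (e l - e p)
  refine ⟨e p, he p, ((1 : Matrix _ _ R).updateRow p c).submatrix (Equiv.swap 0 p) id, ?_, ?_⟩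
  · rw [Matrix.det_permute, ← Matrix.cramer_transpose_apply, Matrix.transpose_one,
      Matrix.cramer_one]
    refine IsUnit.mul ?_ ?_
    · exact (Units.isUnit _).map (Int.castRingHom R)
    · simp [c]
  · ext l
    simp only [Pi.smul_apply, Matrix.submatrix_apply, Equiv.swap_apply_left, id,
      Matrix.updateRow_self, smul_eq_mul, c]
    rw [mul_left_comm, ← pow_add, Nat.add_sub_cancel' (hp l (Finset.mem_univ _)), hr l]

lemma card_pi_dvd (h : TruncDVR R π M q) {ι : Type*} [Fintype ι] {j : ℕ} (hj : j ≤ M) :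
    Nat.card (ι → {x : R // π ^ j ∣ x}) = (q ^ (M - j)) ^ Fintype.card ι := by
  rw [Nat.card_pi, Finset.prod_const, h.card_dvd j hj, Finset.card_univ]

end TruncDVR

/-- Prescribing a condition only on the coordinates in the image of an injection leaves the other
coordinates free. -/
lemma card_comp_le {ι κ V : Type*} [Fintype ι] [Fintype κ] [Finite V] (f : ι → κ)
    (hf : Function.Injective f) (P : (ι → V) → Prop) :
    Nat.card {s : κ → V // P (s ∘ f)} ≤
      Nat.card {t : ι → V // P t} * Nat.card V ^ (Fintype.card κ - Fintype.card ι) := by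
  classical
  have hc : Fintype.card {x // x ∉ Set.range f} = Fintype.card κ - Fintype.card ι := by
    rw [Fintype.card_subtype_compl, Set.card_range_of_injective hf]
  rw [← hc, ← Finset.card_univ, ← Finset.prod_const, ← Nat.card_pi, ← Nat.card_prod]
  refine Nat.card_le_card_of_injective (fun s => (⟨s.1 ∘ f, s.2⟩, fun x => s.1 x.1)) ?_
  rintro ⟨s, hs⟩ ⟨t, ht⟩ hst
  simp only [Prod.mk.injEq, Subtype.mk.injEq] at hst
  refine Subtype.ext (funext fun x => ?_)
  by_cases hx : x ∈ Set.range f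
  · obtain ⟨y, rfl⟩ := hx
    exact congrFun hst.1 y
  · exact congrFun hst.2 ⟨x, hx⟩

/-- The matrix with first row `r` and remaining rows `B`. -/
def consRow {R : Type*} {k l : ℕ} (r : Fin l → R) (B : Matrix (Fin k) (Fin l) R) :
    Matrix (Fin (k + 1)) (Fin l) R :=
  fun a => Fin.cases r B a

@[simp] lemma consRow_zero {R : Type*} {k l : ℕ} (r : Fin l → R) (B : Matrix (Fin k) (Fin l) R)
    (b : Fin l) : consRow r B 0 b = r b := rfl

@[simp] lemma consRow_succ {R : Type*} {k l : ℕ} (r : Fin l → R) (B : Matrix (Fin k) (Fin l) R)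
    (a : Fin k) (b : Fin l) : consRow r B a.succ b = B a b := rfl

lemma det_consRow_single {R : Type*} [CommRing R] {k : ℕ} (c : R)
    (B : Matrix (Fin k) (Fin (k + 1)) R) :
    (consRow (Pi.single 0 c) B).det = c * (B.submatrix id Fin.succ).det := by
  rw [Matrix.det_succ_row_zero, Finset.sum_eq_single 0]
  · simp only [Fin.coe_ofNat_eq_mod, Nat.zero_mod, pow_zero, one_mul, consRow_zero,
      Pi.single_eq_same, Fin.succAbove_zero]
    rfl
  · intro b _ hb
    simp [hb]
  · simp

lemma consRow_single_mul {R : Type*} [CommRing R] {k : ℕ} (c : R)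
    (B : Matrix (Fin k) (Fin (k + 1)) R) (W : Matrix (Fin (k + 1)) (Fin (k + 1)) R) :
    consRow (Pi.single 0 c) B * W = consRow (c • W 0) (B * W) := by
  ext a b
  refine Fin.cases ?_ (fun a => ?_) a
  · simp [Matrix.mul_apply, Pi.single_apply]
  · simp [Matrix.mul_apply]

lemma sum_pow_sub_le {q : ℕ} (hq : 2 ≤ q) (L : ℕ) :
    ∀ n ≤ L, ∑ t ∈ Finset.range (n + 1), q ^ (L - t) + q ^ (L - n) ≤ 2 * q ^ L
  | 0, _ => by simp; omega
  | n + 1, h => by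
    have ih := sum_pow_sub_le hq L n (by omega)
    rw [Finset.sum_range_succ]
    have e : q ^ (L - n) = q ^ (L - (n + 1)) * q := by rw [← pow_succ]; congr 1; omega
    have : q ^ (L - (n + 1)) * 2 ≤ q ^ (L - (n + 1)) * q := Nat.mul_le_mul_left _ hq
    omega

namespace TruncDVR
variable {R : Type*} [CommRing R] {π : R} {M q : ℕ}

/-- If `π ^ m ∣ det A`, then `x ↦ x A` has a kernel of at least `q ^ m` elements. This replaces the
Smith normal form of `A`. By induction on the size: up to an invertible right factor, the first row
of `A` is `(π ^ j, 0, …, 0)`, the remaining columns form a smaller matrix `B'`, and the kernel of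
`A` consists of the `(x₀, x')` with `x' B' = 0` that satisfy one more linear equation. The values
of that equation lie in the ideal generated by `π ^ j` and the annihilator of `det B'`, so it cuts
the size down by no more than the size of this ideal. -/
lemma pow_le_card_ker [Finite R] (h : TruncDVR R π M q) : ∀ {k : ℕ} (A : Matrix (Fin k) (Fin k) R)
    {m : ℕ}, m ≤ M → π ^ m ∣ A.det → q ^ m ≤ Nat.card {x : Fin k → R // Matrix.vecMul x A = 0}
  | 0, A, m, hm, hd => by
    have : m ≤ 0 := h.le_of_pow_dvd hm (by simpa using hd)
    obtain rfl : m = 0 := by omega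
    have : Nonempty {x : Fin 0 → R // Matrix.vecMul x A = 0} := ⟨⟨0, by simp⟩⟩
    rw [pow_zero]
    exact Nat.card_pos (α := {x : Fin 0 → R // Matrix.vecMul x A = 0})
  | k + 1, A, m, hm, hd => by
    obtain ⟨j, hj, W, hW, hr⟩ := h.exists_unimodular (A 0)
    let B : Matrix (Fin k) (Fin (k + 1)) R := A.submatrix Fin.succ id * W⁻¹
    have hA : A = consRow (Pi.single 0 (π ^ j)) B * W := by
      rw [consRow_single_mul, ← hr, Matrix.nonsing_inv_mul_cancel_right _ _ hW]
      ext a b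
      refine Fin.cases rfl (fun a => rfl) a
    let B' : Matrix (Fin k) (Fin k) R := B.submatrix id Fin.succ
    obtain ⟨u, e, he, hu⟩ := h.exists_unit B'.det
    have hme : m ≤ j + e := by
      refine h.le_of_pow_dvd hm ?_
      rw [hA, Matrix.det_mul, det_consRow_single, hW.dvd_mul_right] at hd
      change _ ∣ _ * B'.det at hd
      rwa [hu, mul_left_comm, ← pow_add, u.isUnit.dvd_mul_left] at hd
    have ih := h.pow_le_card_ker B' he (by rw [hu]; exact dvd_mul_left _ _)
    let K := LinearMap.ker (Matrix.vecMulLinear B')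
    have hK : q ^ e ≤ Nat.card K := ih
    let φ : K × R →+ R := AddMonoidHom.mk' (fun p => p.2 * π ^ j + p.1.1 ⬝ᵥ fun a => B a 0) (by
      intro p p'
      simp only [Prod.fst_add, Prod.snd_add, Submodule.coe_add, add_dotProduct]
      ring)
    have hker : Nat.card φ.ker ≤ Nat.card {x : Fin (k + 1) → R // Matrix.vecMul x A = 0} := by
      refine Nat.card_le_card_of_injective
        (fun p => ⟨Fin.cons p.1.2 p.1.1.1, ?_⟩) ?_
      · obtain ⟨⟨⟨x', hx'⟩, x0⟩, hp⟩ := p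
        have hx'' : Matrix.vecMul x' B' = 0 := hx'
        have hp' : x0 * π ^ j + x' ⬝ᵥ (fun a => B a 0) = 0 := hp
        have h0 : Matrix.vecMul (Fin.cons x0 x' : Fin (k + 1) → R)
            (consRow (Pi.single 0 (π ^ j)) B) = 0 := by
          funext b
          refine Fin.cases ?_ (fun b => ?_) b
          · simpa [Matrix.vecMul, dotProduct, Fin.sum_univ_succ] using hp'
          · simpa [Matrix.vecMul, dotProduct, Fin.sum_univ_succ, B'] using congrFun hx'' b
        rw [hA, ← Matrix.vecMul_vecMul, h0, Matrix.zero_vecMul]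
      · rintro ⟨⟨⟨x', hx'⟩, x0⟩, hp⟩ ⟨⟨⟨y', hy'⟩, y0⟩, hp'⟩ hxy
        have e : (Fin.cons x0 x' : Fin (k + 1) → R) = Fin.cons y0 y' := congrArg Subtype.val hxy
        obtain ⟨rfl, rfl⟩ := Fin.cons_injective2 e
        rfl
    -- `det B'` annihilates the kernel of `B'`, which makes kernel vectors divisible by `π ^ (M - e)`
    have hrange : Nat.card φ.range ≤ q ^ (M - min j (M - e)) := by
      rw [← h.card_dvd _ ((min_le_left _ _).trans hj)]
      refine Nat.card_le_card_of_injective (fun y => ⟨y.1, ?_⟩)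
        (fun y y' hy => Subtype.ext (by simpa using hy))
      obtain ⟨_, ⟨⟨⟨x', hx'⟩, x0⟩, rfl⟩⟩ := y
      have hx'' : Matrix.vecMul x' B' = 0 := hx'
      have hz : B'.det • x' = 0 := by
        have := congrArg (fun z => Matrix.vecMul z B'.adjugate) hx''
        simpa [Matrix.vecMul_vecMul, Matrix.mul_adjugate, Matrix.vecMul_smul] using this
      change π ^ _ ∣ x0 * π ^ j + x' ⬝ᵥ (fun a => B a 0)
      refine dvd_add (Dvd.dvd.mul_left (pow_dvd_pow _ (min_le_left _ _)) _)
        (Finset.dvd_sum fun a _ => Dvd.dvd.mul_right ?_ _)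
      refine (pow_dvd_pow _ (min_le_right j (M - e))).trans (h.dvd_of_mul_eq_zero ?_)
      have := congrFun hz a
      rw [Pi.smul_apply, Pi.zero_apply, hu, smul_eq_mul, mul_assoc] at this
      exact (u.isUnit.mul_right_eq_zero).1 this
    have hcard := AddSubgroup.card_mul_index φ.ker
    rw [AddSubgroup.index_ker, Nat.card_prod, h.card_eq] at hcard
    have hq : 0 < q := by have := h.two_le; omega
    refine le_trans ?_ hker
    refine Nat.le_of_mul_le_mul_right ?_ (pow_pos hq (M - min j (M - e)))
    calc q ^ m * q ^ (M - min j (M - e)) ≤ q ^ e * q ^ M := by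
          rw [← pow_add, ← pow_add]
          exact Nat.pow_le_pow_right hq (by omega)
      _ ≤ Nat.card K * q ^ M := Nat.mul_le_mul_right _ hK
      _ = _ := hcard.symm
      _ ≤ _ := Nat.mul_le_mul_left _ hrange

/-- At most `2 ^ k q ^ (M (k + 1) ^ 2 - n)` matrices of size `k + 1` have determinant divisible by
`π ^ n`. For a first row divisible by exactly `π ^ j` the condition reduces to `π ^ (n - j)`
dividing a minor of size `k`, after multiplication by an invertible matrix; summing over `j` costs
a factor `2`, as rows of length at least `2` divisible by `π ^ j` have density at most
`q ^ (-2 j)`, against a loss of `q ^ j`. -/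
lemma card_det_dvd_le [Finite R] (h : TruncDVR R π M q) : ∀ (k : ℕ) {n : ℕ}, n ≤ M →
    Nat.card {A : Matrix (Fin (k + 1)) (Fin (k + 1)) R // π ^ n ∣ A.det} * q ^ n ≤
      2 ^ k * (q ^ M) ^ ((k + 1) * (k + 1))
  | 0, n, hn => by
    have h1 : Nat.card {A : Matrix (Fin (0 + 1)) (Fin (0 + 1)) R // π ^ n ∣ A.det} ≤
        q ^ (M - n) := by
      rw [← h.card_dvd n hn]
      refine Nat.card_le_card_of_injective
        (fun A => ⟨A.1 0 0, by simpa [Matrix.det_fin_one] using A.2⟩) ?_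
      rintro ⟨A, hA⟩ ⟨B, hB⟩ hAB
      refine Subtype.ext (Matrix.ext fun a b => ?_)
      obtain rfl : a = 0 := Fin.fin_one_eq_zero a
      obtain rfl : b = 0 := Fin.fin_one_eq_zero b
      simpa using hAB
    refine (Nat.mul_le_mul_right _ h1).trans ?_
    rw [← pow_add, Nat.sub_add_cancel hn]
    simp
  | k + 1, n, hn => by
    classical
    have := Fintype.ofFinite R
    have hq : 0 < q := by have := h.two_le; omega
    have hM : 0 < q ^ M := pow_pos hq M
    choose j hj W hW hr using fun r : Fin (k + 2) → R => h.exists_unimodular r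
    let P : (Fin (k + 2) → R) → Matrix (Fin (k + 1)) (Fin (k + 2)) R → Prop :=
      fun r B => π ^ n ∣ (consRow r B).det
    -- count of the completions of a fixed first row `r`
    have key : ∀ r, Nat.card {B // P r B} * q ^ n ≤
        2 ^ k * (q ^ M) ^ ((k + 1) * (k + 2)) * q ^ (min (j r) n) := by
      intro r
      let Q : Matrix (Fin (k + 1)) (Fin (k + 1)) R → Prop := fun C => π ^ (n - j r) ∣ C.det
      have h1 : Nat.card {B // P r B} ≤ Nat.card {C // Q C} * (q ^ M) ^ (k + 1) := by
        have h2 := card_comp_le (V := Fin (k + 1) → R) (Fin.succ : Fin (k + 1) → Fin (k + 2))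
          (Fin.succ_injective _) (fun t => Q (Matrix.transpose t))
        have h3 : Nat.card {t : Fin (k + 1) → Fin (k + 1) → R // Q (Matrix.transpose t)} ≤
            Nat.card {C // Q C} :=
          Nat.card_le_card_of_injective (fun t => ⟨Matrix.transpose t.1, t.2⟩)
            (fun t t' ht => Subtype.ext (Matrix.transpose_injective (by simpa using ht)))
        have h4 : Nat.card {B // P r B} ≤
            Nat.card {s : Fin (k + 2) → Fin (k + 1) → R // Q (Matrix.transpose (s ∘ Fin.succ))} := by
          refine Nat.card_le_card_of_injective
            (fun B => ⟨Matrix.transpose (B.1 * (W r)⁻¹), ?_⟩) ?_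
          · obtain ⟨B, hB⟩ := B
            have hB' : π ^ n ∣ (consRow r B).det := hB
            have e : consRow r B = consRow (Pi.single 0 (π ^ j r)) (B * (W r)⁻¹) * W r := by
              rw [consRow_single_mul, ← hr, Matrix.nonsing_inv_mul_cancel_right _ _ (hW r)]
            rw [e, Matrix.det_mul, (hW r).dvd_mul_right, det_consRow_single] at hB'
            exact h.dvd_of_pow_dvd_mul hn hB'
          · rintro ⟨B, hB⟩ ⟨B', hB'⟩ hBB
            have e : B * (W r)⁻¹ = B' * (W r)⁻¹ :=
              Matrix.transpose_injective (congrArg Subtype.val hBB)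
            refine Subtype.ext ?_
            have := congrArg (· * W r) e
            simpa [Matrix.nonsing_inv_mul_cancel_right _ _ (hW r)] using this
        refine h4.trans (h2.trans (Nat.mul_le_mul h3 ?_))
        rw [Nat.card_fun, h.card_eq, Fintype.card_fin, Fintype.card_fin, Nat.card_fin]
        simp
      have ih := h.card_det_dvd_le k (n := n - j r) (by omega)
      calc Nat.card {B // P r B} * q ^ n
          ≤ Nat.card {C // Q C} * (q ^ M) ^ (k + 1) * q ^ n := Nat.mul_le_mul_right _ h1
        _ = Nat.card {C // Q C} * q ^ (n - j r) * ((q ^ M) ^ (k + 1) * q ^ (min (j r) n)) := by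
            have : q ^ n = q ^ (n - j r) * q ^ (min (j r) n) := by
              rw [← pow_add]; congr 1; omega
            rw [this]; ring
        _ ≤ 2 ^ k * (q ^ M) ^ ((k + 1) * (k + 1)) * ((q ^ M) ^ (k + 1) * q ^ (min (j r) n)) :=
            Nat.mul_le_mul_right _ ih
        _ = _ := by ring
    have htotal : Nat.card {A : Matrix (Fin (k + 2)) (Fin (k + 2)) R // π ^ n ∣ A.det} ≤
        ∑ r, Nat.card {B // P r B} := by
      rw [← Nat.card_sigma]
      refine Nat.card_le_card_of_injective
        (fun A => ⟨A.1 0, A.1.submatrix Fin.succ id, ?_⟩) ?_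
      · have e : consRow (A.1 0) (A.1.submatrix Fin.succ id) = A.1 := by
          ext a b
          refine Fin.cases rfl (fun a => rfl) a
        change π ^ n ∣ _
        rw [e]
        exact A.2
      · rintro ⟨A, hA⟩ ⟨A', hA'⟩ hAA
        have e : ∀ A : Matrix (Fin (k + 2)) (Fin (k + 2)) R,
            consRow (A 0) (A.submatrix Fin.succ id) = A := by
          intro A
          ext a b
          refine Fin.cases rfl (fun a => rfl) a
        have := congrArg (fun x : (Σ r, {B // P r B}) => consRow x.1 x.2.1) hAA
        exact Subtype.ext (by simpa only [e] using this)
    -- bound `q ^ min (j r) n` by the sum of all `q ^ t` with `t ≤ j r` and `t ≤ n`, and count the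
    -- rows divisible by `π ^ t` instead of those divisible by exactly `π ^ t`
    have hlevel : ∑ r, q ^ (min (j r) n) ≤ 2 * (q ^ M) ^ (k + 2) := by
      have hcount : ∀ t ≤ n, (Finset.univ.filter fun r => t ≤ j r).card ≤
          (q ^ (M - t)) ^ (k + 2) := by
        intro t ht
        have := h.card_pi_dvd (ι := Fin (k + 2)) (ht.trans hn)
        rw [Fintype.card_fin] at this
        rw [← this, ← Fintype.card_subtype, ← Nat.card_eq_fintype_card]
        refine Nat.card_le_card_of_injective (fun r l => ⟨r.1 l, ?_⟩) ?_
        · rw [hr r.1]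
          exact Dvd.dvd.mul_right (pow_dvd_pow _ r.2) _
        · intro r r' hrr
          refine Subtype.ext (funext fun l => ?_)
          simpa using congrArg Subtype.val (congrFun hrr l)
      calc ∑ r, q ^ (min (j r) n)
          ≤ ∑ r, ∑ t ∈ Finset.range (n + 1), if t ≤ j r then q ^ t else 0 := by
            refine Finset.sum_le_sum fun r _ => ?_
            have := Finset.single_le_sum (f := fun t => if t ≤ j r then q ^ t else 0)
              (s := Finset.range (n + 1)) (fun _ _ => Nat.zero_le _)
              (a := min (j r) n) (Finset.mem_range.2 (by omega))
            simpa using this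
        _ = ∑ t ∈ Finset.range (n + 1), (Finset.univ.filter fun r => t ≤ j r).card * q ^ t := by
            rw [Finset.sum_comm]
            refine Finset.sum_congr rfl fun t _ => ?_
            rw [← Finset.sum_filter, Finset.sum_const, smul_eq_mul]
        _ ≤ ∑ t ∈ Finset.range (n + 1), q ^ (M * (k + 2) - t) := by
            refine Finset.sum_le_sum fun t ht => ?_
            have ht' : t ≤ n := by simpa [Nat.lt_succ_iff] using ht
            refine (Nat.mul_le_mul_right _ (hcount t ht')).trans ?_
            rw [← pow_mul, ← pow_add]
            refine Nat.pow_le_pow_right hq ?_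
            obtain ⟨s, rfl⟩ := Nat.exists_eq_add_of_le (ht'.trans hn)
            rw [Nat.add_sub_cancel_left]
            refine Nat.le_sub_of_add_le ?_
            nlinarith [Nat.zero_le (t * k)]
        _ ≤ _ := by
            have hle : n ≤ M * (k + 2) := hn.trans (Nat.le_mul_of_pos_right _ (by omega))
            have := sum_pow_sub_le h.two_le (M * (k + 2)) n hle
            rw [← pow_mul]
            omega
    calc _ ≤ (∑ r, Nat.card {B // P r B}) * q ^ n := Nat.mul_le_mul_right _ htotal
      _ = ∑ r, Nat.card {B // P r B} * q ^ n := Finset.sum_mul ..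
      _ ≤ ∑ r, 2 ^ k * (q ^ M) ^ ((k + 1) * (k + 2)) * q ^ (min (j r) n) :=
          Finset.sum_le_sum fun r _ => key r
      _ = 2 ^ k * (q ^ M) ^ ((k + 1) * (k + 2)) * ∑ r, q ^ (min (j r) n) :=
          (Finset.mul_sum ..).symm
      _ ≤ 2 ^ k * (q ^ M) ^ ((k + 1) * (k + 2)) * (2 * (q ^ M) ^ (k + 2)) :=
          Nat.mul_le_mul_left _ hlevel
      _ = _ := by ring


/-- The `d × i` matrices whose rows indexed by `I₁` form the identity matrix and whose minor with
rows `I₀` is divisible by `π ^ n`. Rows are selected by functions `Fin i → Fin d`. -/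
def normalized (π : R) {d i : ℕ} (I₀ I₁ : Fin i → Fin d) (n : ℕ) :
    Set (Matrix (Fin d) (Fin i) R) :=
  {t | t.submatrix I₁ id = 1 ∧ π ^ n ∣ (t.submatrix I₀ id).det}

lemma submatrix_mul_left {d i : ℕ} (I : Fin i → Fin d) (t : Matrix (Fin d) (Fin i) R)
    (A : Matrix (Fin i) (Fin i) R) :
    (t * A).submatrix I id = t.submatrix I id * A := by
  ext a b
  simp [Matrix.mul_apply]

/-- A normalized matrix `t` and an invertible `G = 1 + π B` can be recovered from `t * G`, whose
`I₀`-minor is still divisible by `π ^ n`. The count of such matrices is thus that of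
`card_det_dvd_le`, up to the number of matrices `π B`. -/
lemma card_normalized_le [Finite R] (h : TruncDVR R π M q) (hM : 1 ≤ M) {d k : ℕ}
    {I₀ I₁ : Fin (k + 1) → Fin d} (h₀ : Function.Injective I₀) {n : ℕ} (hn : n ≤ M) :
    Nat.card (normalized π I₀ I₁ n) * (q ^ (M - 1)) ^ ((k + 1) * (k + 1)) * q ^ n ≤
      2 ^ k * (q ^ M) ^ (d * (k + 1)) := by
  have hid : k + 1 ≤ d := by simpa using Fintype.card_le_of_injective _ h₀
  have hπ : IsNilpotent π := ⟨M, h.pow_eq_zero⟩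
  have h1 : Nat.card (Fin (k + 1) → Fin (k + 1) → {x : R // π ^ 1 ∣ x}) =
      (q ^ (M - 1)) ^ ((k + 1) * (k + 1)) := by
    rw [Nat.card_fun, h.card_pi_dvd hM, Fintype.card_fin, Nat.card_fin, ← pow_mul]
  -- the determinant of `1 + π B` is congruent to `1` modulo the nilpotent `π`
  have hunit : ∀ B : Fin (k + 1) → Fin (k + 1) → {x : R // π ^ 1 ∣ x},
      IsUnit (1 + Matrix.of fun a b => (B a b).1 : Matrix (Fin (k + 1)) (Fin (k + 1)) R).det := by
    intro B
    set G : Matrix (Fin (k + 1)) (Fin (k + 1)) R := 1 + Matrix.of fun a b => (B a b).1 with hG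
    let f := Ideal.Quotient.mk (Ideal.span {π})
    have hf : f G.det = 1 := by
      rw [RingHom.map_det]
      have : f.mapMatrix G = 1 := by
        ext a b
        have hz : f (B a b).1 = 0 := by
          refine Ideal.Quotient.eq_zero_iff_mem.2 (Ideal.mem_span_singleton.2 ?_)
          simpa using (B a b).2
        simp only [hG, RingHom.mapMatrix_apply, Matrix.map_apply, Matrix.add_apply,
          Matrix.of_apply, map_add, hz, add_zero, Matrix.one_apply]
        split_ifs <;> simp
      rw [this, Matrix.det_one]
    have hmem : G.det - 1 ∈ Ideal.span {π} := by
      rw [← Ideal.Quotient.eq_zero_iff_mem]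
      change f _ = 0
      rw [map_sub, hf, map_one, sub_self]
    obtain ⟨c, hc⟩ := Ideal.mem_span_singleton.1 hmem
    have hnil : IsNilpotent (G.det - 1) := by
      rw [hc]
      exact (Commute.all π c).isNilpotent_mul_right hπ
    have := hnil.isUnit_one_add
    rwa [add_sub_cancel] at this
  have h2 : Nat.card (normalized π I₀ I₁ n) * (q ^ (M - 1)) ^ ((k + 1) * (k + 1)) ≤
      Nat.card {s : Fin d → Fin (k + 1) → R // π ^ n ∣ (Matrix.of (s ∘ I₀)).det} := by
    rw [← h1, ← Nat.card_prod]
    refine Nat.card_le_card_of_injective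
      (fun p => ⟨p.1.1 * (1 + Matrix.of fun a b => (p.2 a b).1), ?_⟩) ?_
    · have := submatrix_mul_left I₀ p.1.1 (1 + Matrix.of fun a b => (p.2 a b).1)
      change π ^ n ∣ ((p.1.1 * (1 + Matrix.of fun a b => (p.2 a b).1)).submatrix I₀ id).det
      rw [this, Matrix.det_mul]
      exact Dvd.dvd.mul_right p.1.2.2 _
    · rintro ⟨⟨t, ht⟩, B⟩ ⟨⟨t', ht'⟩, B'⟩ hp
      have e : t * (1 + Matrix.of fun a b => (B a b).1) =
          t' * (1 + Matrix.of fun a b => (B' a b).1) := congrArg Subtype.val hp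
      have e1 := congrArg (fun s : Matrix (Fin d) (Fin (k + 1)) R => s.submatrix I₁ id) e
      simp only [submatrix_mul_left, ht.1, ht'.1, one_mul, add_right_inj] at e1
      have e2 : B = B' := by
        funext a b
        exact Subtype.ext (congrFun (congrFun e1 a) b)
      subst e2
      have e3 := congrArg (· * (1 + Matrix.of fun a b => (B a b).1)⁻¹) e
      simp only [Matrix.mul_nonsing_inv_cancel_right _ _ (hunit B)] at e3
      subst e3
      rfl
  have h3 := card_comp_le (V := Fin (k + 1) → R) I₀ h₀ (fun t => π ^ n ∣ (Matrix.of t).det)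
  rw [Nat.card_fun, h.card_eq, Fintype.card_fin, Fintype.card_fin, Nat.card_fin] at h3
  have h4 := h.card_det_dvd_le k hn
  calc _ ≤ Nat.card {A : Matrix (Fin (k + 1)) (Fin (k + 1)) R // π ^ n ∣ A.det} *
        ((q ^ M) ^ (k + 1)) ^ (d - (k + 1)) * q ^ n := Nat.mul_le_mul_right _ (h2.trans h3)
    _ = Nat.card {A : Matrix (Fin (k + 1)) (Fin (k + 1)) R // π ^ n ∣ A.det} * q ^ n *
        ((q ^ M) ^ (k + 1)) ^ (d - (k + 1)) := by ring
    _ ≤ 2 ^ k * (q ^ M) ^ ((k + 1) * (k + 1)) * ((q ^ M) ^ (k + 1)) ^ (d - (k + 1)) :=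
        Nat.mul_le_mul_right _ h4
    _ = _ := by
        obtain ⟨c, rfl⟩ := Nat.exists_eq_add_of_le hid
        rw [Nat.add_sub_cancel_left]
        ring

/-- Right multiplication by `A` with `det A = u π ^ m` collapses the normalized matrices by a factor
`q ^ ((d - i) m)`: adding elements of the kernel of `A` to the `d - i` rows outside `I₁` does not
change the product, and keeps the matrix normalized, because these elements are divisible by
`π ^ (M - m)`. -/
lemma card_image_mul_le [Finite R] (h : TruncDVR R π M q) {d i : ℕ}
    {I₀ I₁ : Fin i → Fin d} (h₁ : Function.Injective I₁) {n m : ℕ} (hnm : n + m ≤ M)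
    (A : Matrix (Fin i) (Fin i) R) (u : Rˣ) (hA : A.det = u * π ^ m) :
    Nat.card ((· * A) '' normalized π I₀ I₁ n) * q ^ ((d - i) * m) ≤
      Nat.card (normalized π I₀ I₁ n) := by
  classical
  let K := {x : Fin i → R // Matrix.vecMul x A = 0}
  have hK : q ^ m ≤ Nat.card K :=
    h.pow_le_card_ker A (by omega) (by rw [hA]; exact dvd_mul_left _ _)
  -- `det A` annihilates the kernel of `A`, so kernel vectors are divisible by `π ^ (M - m)`
  have hKdvd : ∀ x : K, ∀ l, π ^ n ∣ x.1 l := by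
    intro x l
    have hz : A.det • x.1 = 0 := by
      have := congrArg (fun z => Matrix.vecMul z A.adjugate) x.2
      simpa [Matrix.vecMul_vecMul, Matrix.mul_adjugate, Matrix.vecMul_smul] using this
    refine (pow_dvd_pow _ (by omega)).trans (h.dvd_of_mul_eq_zero (j := m) ?_)
    have := congrFun hz l
    rw [Pi.smul_apply, Pi.zero_apply, hA, smul_eq_mul, mul_assoc] at this
    exact (u.isUnit.mul_right_eq_zero).1 this
  -- a family of kernel vectors, one for each row outside `I₁`, as a `d × i` matrix
  let ext : ({x // x ∉ Set.range I₁} → K) → Matrix (Fin d) (Fin i) R :=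
    fun w a b => if ha : a ∉ Set.range I₁ then (w ⟨a, ha⟩).1 b else 0
  have hext_out : ∀ w a b, (ha : a ∉ Set.range I₁) → ext w a b = (w ⟨a, ha⟩).1 b :=
    fun w a b ha => dif_pos ha
  have hext_in : ∀ w a b, a ∈ Set.range I₁ → ext w a b = 0 :=
    fun w a b ha => dif_neg (not_not.2 ha)
  have hext_mul : ∀ w, ext w * A = 0 := by
    intro w
    ext a b
    rw [Matrix.mul_apply]
    by_cases ha : a ∈ Set.range I₁
    · simp [hext_in w a _ ha]
    · simp only [hext_out w a _ ha]
      exact congrFun (w ⟨a, ha⟩).2 b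
  have hext_dvd : ∀ w a b, π ^ n ∣ ext w a b := by
    intro w a b
    by_cases ha : a ∈ Set.range I₁
    · simp only [hext_in w a b ha, dvd_zero]
    · simpa only [hext_out w a b ha] using hKdvd _ b
  have hext_add : ∀ t ∈ normalized π I₀ I₁ n, ∀ w, t + ext w ∈ normalized π I₀ I₁ n := by
    intro t ht w
    refine ⟨?_, ?_⟩
    · rw [← ht.1]
      ext a b
      rw [Matrix.submatrix_apply, Matrix.submatrix_apply, Matrix.add_apply,
        hext_in w _ _ ⟨a, rfl⟩, add_zero]
    · have h3 := ht.2
      rw [← Ideal.mem_span_singleton, ← Ideal.Quotient.eq_zero_iff_mem, RingHom.map_det] at h3 ⊢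
      rw [← h3]
      congr 1
      ext a b
      simp only [RingHom.mapMatrix_apply, Matrix.map_apply, Matrix.submatrix_apply, id,
        Matrix.add_apply, map_add]
      rw [add_eq_left, Ideal.Quotient.eq_zero_iff_mem, Ideal.mem_span_singleton]
      exact hext_dvd _ _ _
  have hc : Fintype.card {x // x ∉ Set.range I₁} = d - i := by
    rw [Fintype.card_subtype_compl, Set.card_range_of_injective h₁, Fintype.card_fin,
      Fintype.card_fin]
  have hcard : q ^ ((d - i) * m) ≤ Nat.card ({x // x ∉ Set.range I₁} → K) := by
    rw [Nat.card_fun, Nat.card_eq_fintype_card (α := {x // x ∉ Set.range I₁}), hc, mul_comm,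
      pow_mul]
    exact Nat.pow_le_pow_left hK _
  refine (Nat.mul_le_mul_left _ hcard).trans ?_
  rw [← Nat.card_prod]
  choose τ hτ hτA using fun y : ((· * A) '' normalized π I₀ I₁ n) => y.2
  refine Nat.card_le_card_of_injective
    (fun p => ⟨τ p.1 + ext p.2, hext_add _ (hτ _) _⟩) ?_
  rintro ⟨y, w⟩ ⟨y', w'⟩ hp
  have e : τ y + ext w = τ y' + ext w' := congrArg Subtype.val hp
  have e1 := congrArg (· * A) e
  simp only [Matrix.add_mul, hext_mul, add_zero] at e1
  have e2 : y = y' := Subtype.ext (by rw [← hτA y, ← hτA y']; exact e1)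
  subst e2
  have e3 : ext w = ext w' := add_left_cancel e
  refine Prod.ext rfl (funext fun a => Subtype.ext (funext fun b => ?_))
  have := congrFun (congrFun e3 a.1) b
  rwa [hext_out _ _ _ a.2, hext_out _ _ _ a.2] at this

/-- The number of `d × (k + 1)` matrices `s = t * A`, where `A` consists of the rows `I₁` of `s` and
has determinant of valuation `m`, and `t` is normalized with `I₀`-minor divisible by
`π ^ (N - m)`. The three savings are `q ^ m` for the choice of `A`, `q ^ (N - m)` for the choice of
`t`, and `q ^ ((d - (k + 1)) m)` for the coincidences among the products `t * A`. -/
theorem card_le [Finite R] (h : TruncDVR R π M q) (hM : 1 ≤ M) {d k : ℕ}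
    {I₀ I₁ : Fin (k + 1) → Fin d} (h₀ : Function.Injective I₀) (h₁ : Function.Injective I₁)
    {m N : ℕ} (hmN : m ≤ N) (hN : N ≤ M) :
    Nat.card {s : Matrix (Fin d) (Fin (k + 1)) R //
      (∃ u : Rˣ, (s.submatrix I₁ id).det = u * π ^ m) ∧
      ∃ t ∈ normalized π I₀ I₁ (N - m), s = t * s.submatrix I₁ id} *
      q ^ (N + (d - (k + 1)) * m) ≤
    4 ^ k * q ^ ((k + 1) * (k + 1)) * (q ^ M) ^ (d * (k + 1)) := by
  classical
  have := Fintype.ofFinite R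
  have hq : 0 < q := by have := h.two_le; omega
  set n := N - m with hn
  let 𝒜 := {A : Matrix (Fin (k + 1)) (Fin (k + 1)) R // ∃ u : Rˣ, A.det = u * π ^ m}
  have h1 : Nat.card {s : Matrix (Fin d) (Fin (k + 1)) R //
      (∃ u : Rˣ, (s.submatrix I₁ id).det = u * π ^ m) ∧
      ∃ t ∈ normalized π I₀ I₁ n, s = t * s.submatrix I₁ id} ≤
      ∑ A : 𝒜, Nat.card ((· * A.1) '' normalized π I₀ I₁ n) := by
    rw [← Nat.card_sigma]
    refine Nat.card_le_card_of_injective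
      (fun s => ⟨⟨s.1.submatrix I₁ id, s.2.1⟩, ⟨s.1, ?_⟩⟩) ?_
    · obtain ⟨t, ht, e⟩ := s.2.2
      exact ⟨t, ht, e.symm⟩
    · intro s s' hs
      exact Subtype.ext (congrArg
        (fun x : (Σ A : 𝒜, ((· * A.1) '' normalized π I₀ I₁ n)) => x.2.1) hs)
  have h2 : (∑ A : 𝒜, Nat.card ((· * A.1) '' normalized π I₀ I₁ n)) * q ^ ((d - (k + 1)) * m) ≤
      Nat.card 𝒜 * Nat.card (normalized π I₀ I₁ n) := by
    rw [Finset.sum_mul, Nat.card_eq_fintype_card (α := 𝒜), ← Finset.card_univ, ← smul_eq_mul]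
    refine Finset.sum_le_card_nsmul _ _ _ fun A _ => ?_
    obtain ⟨u, hu⟩ := A.2
    exact h.card_image_mul_le h₁ (by omega) A.1 u hu
  have h3 : Nat.card 𝒜 * q ^ m ≤ 2 ^ k * (q ^ M) ^ ((k + 1) * (k + 1)) := by
    refine (Nat.mul_le_mul_right _ ?_).trans (h.card_det_dvd_le k (hmN.trans hN))
    refine Nat.card_le_card_of_injective (fun A => ⟨A.1, ?_⟩)
      (fun A A' hA => Subtype.ext (by simpa using hA))
    obtain ⟨u, hu⟩ := A.2
    rw [hu]
    exact dvd_mul_left _ _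
  have h4 := h.card_normalized_le hM (I₁ := I₁) h₀ (n := n) (by omega)
  set S := Nat.card {s : Matrix (Fin d) (Fin (k + 1)) R //
      (∃ u : Rˣ, (s.submatrix I₁ id).det = u * π ^ m) ∧
      ∃ t ∈ normalized π I₀ I₁ n, s = t * s.submatrix I₁ id}
  set T := Nat.card (normalized π I₀ I₁ n)
  set a := (q ^ (M - 1)) ^ ((k + 1) * (k + 1)) with ha
  have ha' : (q ^ M) ^ ((k + 1) * (k + 1)) = a * q ^ ((k + 1) * (k + 1)) := by
    rw [ha, ← mul_pow, ← pow_succ, Nat.sub_add_cancel hM]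
  refine Nat.le_of_mul_le_mul_right ?_ (show 0 < a by positivity)
  calc S * q ^ (N + (d - (k + 1)) * m) * a
      = S * q ^ ((d - (k + 1)) * m) * (q ^ m * (a * q ^ n)) := by
        have : q ^ (N + (d - (k + 1)) * m) = q ^ ((d - (k + 1)) * m) * (q ^ m * q ^ n) := by
          rw [← pow_add, ← pow_add]; congr 1; omega
        rw [this]; ring
    _ ≤ Nat.card 𝒜 * T * (q ^ m * (a * q ^ n)) :=
        Nat.mul_le_mul_right _ ((Nat.mul_le_mul_right _ h1).trans h2)
    _ = (Nat.card 𝒜 * q ^ m) * (T * a * q ^ n) := by ring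
    _ ≤ (2 ^ k * (q ^ M) ^ ((k + 1) * (k + 1))) * (2 ^ k * (q ^ M) ^ (d * (k + 1))) :=
        Nat.mul_le_mul h3 h4
    _ = _ := by
        rw [ha', show (4 : ℕ) = 2 * 2 from rfl, mul_pow]
        ring

end TruncDVR

/-! ### Power series modulo a power of `X` -/

section

open PowerSeries

lemma PowerSeries.exists_unit_mul_X_pow {F : Type*} [Field F] {f : F⟦X⟧} (hf : f ≠ 0) :
    ∃ u : F⟦X⟧ˣ, ∃ n : ℕ, f = (u : F⟦X⟧) * (X : F⟦X⟧) ^ n := by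
  obtain ⟨n, u, h⟩ := IsDiscreteValuationRing.eq_unit_mul_pow_irreducible hf
    (PowerSeries.X_irreducible (R := F))
  exact ⟨u, n, h⟩

/-- The truncation `𝒪 / (X ^ M)` of `𝒪 = 𝔽_q[[X]]`. -/
abbrev TruncRing (F : Type*) [Field F] (M : ℕ) : Type _ :=
  F⟦X⟧ ⧸ Ideal.span {(X : F⟦X⟧) ^ M}

namespace TruncRing
variable {F : Type*} [Field F] {M : ℕ}

/-- Reduction modulo `X ^ M`. -/
noncomputable abbrev mk (F : Type*) [Field F] (M : ℕ) : F⟦X⟧ →+* TruncRing F M := Ideal.Quotient.mk _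

lemma mk_eq_zero {f : F⟦X⟧} : mk F M f = 0 ↔ X ^ M ∣ f := by
  rw [← Ideal.mem_span_singleton]
  exact Ideal.Quotient.eq_zero_iff_mem

lemma mk_eq_mk {f g : F⟦X⟧} : mk F M f = mk F M g ↔ X ^ M ∣ f - g := by
  rw [← mk_eq_zero, map_sub, sub_eq_zero]

lemma card_X_pow_dvd [Fintype F] {j : ℕ} (hj : j ≤ M) :
    Nat.card {x : TruncRing F M // mk F M X ^ j ∣ x} = Fintype.card F ^ (M - j) := by
  -- multiples of `X ^ j` correspond to the `M - j` coefficients above `X ^ j`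
  let p : (Fin (M - j) → F) → F⟦X⟧ := fun g => PowerSeries.mk fun n =>
    if h : n < M - j then g ⟨n, h⟩ else 0
  let φ : (Fin (M - j) → F) → {x : TruncRing F M // mk F M X ^ j ∣ x} := fun g =>
    ⟨mk F M (X ^ j * p g), by rw [map_mul, map_pow]; exact dvd_mul_right _ _⟩
  have hM : (X : F⟦X⟧) ^ M = X ^ j * X ^ (M - j) := by rw [← pow_add, Nat.add_sub_cancel' hj]
  have hX : (X : F⟦X⟧) ^ j ≠ 0 := pow_ne_zero _ PowerSeries.X_ne_zero
  have hφ : Function.Bijective φ := by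
    constructor
    · intro g g' hg
      have h1 : mk F M (X ^ j * p g) = mk F M (X ^ j * p g') := congrArg Subtype.val hg
      rw [mk_eq_mk, ← mul_sub, hM, mul_dvd_mul_iff_left hX, PowerSeries.X_pow_dvd_iff] at h1
      funext l
      have := h1 l.1 l.2
      simpa [p, PowerSeries.coeff_mk, sub_eq_zero] using this
    · rintro ⟨x, c, rfl⟩
      obtain ⟨f, rfl⟩ := Ideal.Quotient.mk_surjective c
      refine ⟨fun l => PowerSeries.coeff l.1 f, Subtype.ext ?_⟩
      change mk F M _ = mk F M X ^ j * mk F M f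
      rw [← map_pow, ← map_mul, mk_eq_mk, ← mul_sub, hM, mul_dvd_mul_iff_left hX,
        PowerSeries.X_pow_dvd_iff]
      intro n hn
      simp [p, PowerSeries.coeff_mk, hn]
  rw [← Nat.card_congr (Equiv.ofBijective φ hφ), Nat.card_fun]
  simp

theorem truncDVR (F : Type*) [Field F] [Fintype F] (M : ℕ) :
    TruncDVR (TruncRing F M) (mk F M X) M (Fintype.card F) where
  two_le := Fintype.one_lt_card
  pow_eq_zero := by rw [← map_pow, mk_eq_zero]
  exists_unit r := by
    obtain ⟨f, rfl⟩ := Ideal.Quotient.mk_surjective r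
    have hz : mk F M X ^ M = 0 := by rw [← map_pow, mk_eq_zero]
    rcases eq_or_ne f 0 with rfl | hf
    · exact ⟨1, M, le_rfl, by rw [hz, map_zero, mul_zero]⟩
    · obtain ⟨u, n, rfl⟩ := PowerSeries.exists_unit_mul_X_pow hf
      refine ⟨Units.map (mk F M).toMonoidHom u, min n M, min_le_right _ _, ?_⟩
      change mk F M _ = mk F M u * _
      rw [map_mul, map_pow]
      rcases le_total n M with h | h
      · rw [min_eq_left h]
      · rw [min_eq_right h, hz, pow_eq_zero_of_le h hz]
  card_dvd j hj := card_X_pow_dvd hj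

instance [Fintype F] : Finite (TruncRing F M) := by
  have h := card_X_pow_dvd (F := F) (M := M) (Nat.zero_le M)
  have : Finite {x : TruncRing F M // mk F M X ^ 0 ∣ x} :=
    Nat.finite_of_card_ne_zero (by rw [h]; exact pow_ne_zero _ Fintype.card_ne_zero)
  exact Finite.of_equiv _ (Equiv.subtypeUnivEquiv (p := fun x => mk F M X ^ 0 ∣ x) fun x => by
    rw [pow_zero]; exact one_dvd x)

end TruncRing

/-- Cramer's rule: if the minor with rows `I₁` divides all minors of the same size, then the
matrix is an integral multiple of its rows `I₁`. -/
lemma exists_mul_of_dvd_minors {F : Type*} [Field F] {d i m : ℕ}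
    (f : Matrix (Fin d) (Fin i) F⟦X⟧) (I₁ : Fin i → Fin d)
    {u : F⟦X⟧ˣ} (hu : (f.submatrix I₁ id).det = (u : F⟦X⟧) * (X : F⟦X⟧) ^ m)
    (hall : ∀ I : Fin i → Fin d, (X : F⟦X⟧) ^ m ∣ (f.submatrix I id).det) :
    ∃ t : Matrix (Fin d) (Fin i) F⟦X⟧, t.submatrix I₁ id = 1 ∧ f = t * f.submatrix I₁ id := by
  set A := f.submatrix I₁ id with hA
  have hX : (X : F⟦X⟧) ^ m ≠ 0 := pow_ne_zero _ PowerSeries.X_ne_zero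
  have hdvd : ∀ a l, (X : F⟦X⟧) ^ m ∣ (f * A.adjugate) a l := by
    intro a l
    -- the entries of `f * adjugate A` are minors of `f`: row `l` of `A` is replaced by row `a` of `f`
    have e : (f * A.adjugate) a l = (f.submatrix (Function.update I₁ l a) id).det := by
      have e1 : f.submatrix (Function.update I₁ l a) id = A.updateRow l (f a) := by
        ext b c
        rcases eq_or_ne b l with rfl | hb
        · simp
        · simp [hb, hA]
      rw [e1, ← Matrix.cramer_transpose_apply, Matrix.cramer_eq_adjugate_mulVec,
        ← Matrix.adjugate_transpose, Matrix.mulVec_transpose]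
      rfl
    rw [e]
    exact hall _
  choose z hz using hdvd
  have hzA : f * A.adjugate = (X : F⟦X⟧) ^ m • Matrix.of z := by
    ext a l
    simp [hz a l]
  have h1 : (X : F⟦X⟧) ^ m • (u.val • f) = (X : F⟦X⟧) ^ m • (Matrix.of z * A) := by
    have := congrArg (· * A) hzA
    simp only [Matrix.mul_assoc, Matrix.adjugate_mul, hu, Matrix.mul_smul, Matrix.mul_one,
      Matrix.smul_mul] at this
    rw [← this, smul_smul, mul_comm]
  have h2 : u.val • f = Matrix.of z * A := smul_right_injective _ hX h1
  have h3 : f = (u⁻¹.val • Matrix.of z) * A := by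
    rw [Matrix.smul_mul, ← h2, smul_smul, Units.inv_mul, one_smul]
  refine ⟨u⁻¹.val • Matrix.of z, ?_, h3⟩
  have h4 : ((u⁻¹.val • Matrix.of z).submatrix I₁ id) * A = A := by
    conv_rhs => rw [hA, h3]
    ext a b
    simp [Matrix.mul_apply]
  have h5 := congrArg (· * A.adjugate) h4
  simp only [Matrix.mul_assoc, Matrix.mul_adjugate, hu, Matrix.mul_smul, Matrix.mul_one] at h5
  exact smul_right_injective _ (mul_ne_zero u.ne_zero hX) h5

open LaurentSeries in
lemma isOpen_valuation_le {F : Type*} [Field F] (M : ℕ) :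
    IsOpen {x : LaurentSeries F | Valued.v x ≤ WithZero.exp (-(M : ℤ))} := by
  have := Valued.isOpen_closedBall (LaurentSeries F)
    (r := Valued.v.restrict ((HahnSeries.ofPowerSeries ℤ F) PowerSeries.X ^ M)) (by
      rw [Ne, Valuation.restrict_eq_zero_iff, LaurentSeries.valuation_X_pow]
      exact WithZero.exp_ne_zero)
  convert this using 3
  rw [Valuation.restrict_le_iff, LaurentSeries.valuation_X_pow]

open LaurentSeries in
lemma valuation_le_eq_image {F : Type*} [Field F] (M : ℕ) :
    {x : LaurentSeries F | Valued.v x ≤ WithZero.exp (-(M : ℤ))} =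
      {x | ∃ f : F⟦X⟧, X ^ M ∣ f ∧ HahnSeries.ofPowerSeries ℤ F f = x} := by
  ext x
  simp only [Set.mem_ofPred_eq]
  constructor
  · intro h
    obtain ⟨f, rfl⟩ := (LaurentSeries.val_le_one_iff_eq_coe F x).1 (h.trans (by
      rw [← WithZero.exp_zero, WithZero.exp_le_exp]; omega))
    refine ⟨f, ?_, rfl⟩
    rw [PowerSeries.X_pow_dvd_iff]
    intro n hn
    have := LaurentSeries.valuation_le_iff_coeff_lt_eq_zero F |>.1 h n (by omega)
    rwa [LaurentSeries.coeff_coe_powerSeries] at this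
  · rintro ⟨_, ⟨f, rfl⟩, rfl⟩
    rw [map_mul, map_mul, map_pow, LaurentSeries.valuation_X_pow]
    refine mul_le_of_le_one_right' ?_
    exact (LaurentSeries.val_le_one_iff_eq_coe F _).2 ⟨f, rfl⟩

/-! ### Integral Laurent series and minors -/

section Minors
variable {F : Type*} [Field F]

/-- The inclusion of `𝒪 = 𝔽_q[[X]]` in `K = 𝔽_q((X))`. -/
noncomputable abbrev toLaurent (F : Type*) [Field F] : F⟦X⟧ →+* LaurentSeries F :=
  HahnSeries.ofPowerSeries ℤ F

lemma absv_le_one_iff [Fintype F] {x : LaurentSeries F} :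
    absv F x ≤ 1 ↔ ∃ f, toLaurent F f = x := by
  have hq : (1 : ℝ) < Fintype.card F := by exact_mod_cast Fintype.one_lt_card
  have h1 : (∃ f, toLaurent F f = x) ↔ ∀ n : ℤ, n < 0 → x.coeff n = 0 := by
    rw [← LaurentSeries.valuation_le_iff_coeff_lt_eq_zero F (D := 0), neg_zero,
      WithZero.exp_zero, LaurentSeries.val_le_one_iff_eq_coe]
  rw [h1, absv]
  split_ifs with hx
  · simp [hx]
  · rw [zpow_le_one_iff_right₀ hq, neg_nonpos, HahnSeries.le_order_iff_forall hx]

lemma eq_unit_mul_of_absv [Fintype F] {f : F⟦X⟧} {n : ℕ}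
    (h : absv F (toLaurent F f) = (Fintype.card F : ℝ) ^ (-(n : ℤ))) :
    ∃ u : F⟦X⟧ˣ, f = (u : F⟦X⟧) * (X : F⟦X⟧) ^ n := by
  have hq : (1 : ℝ) < Fintype.card F := by exact_mod_cast Fintype.one_lt_card
  have hpos : (0 : ℝ) < (Fintype.card F : ℝ) ^ (-(n : ℤ)) := by positivity
  rw [absv] at h
  split_ifs at h with h0
  · exact absurd h hpos.ne
  have hf : f ≠ 0 := by rintro rfl; exact h0 (map_zero _)
  obtain ⟨u, k, rfl⟩ := PowerSeries.exists_unit_mul_X_pow hf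
  have hord := neg_injective (zpow_right_injective₀ (by linarith) hq.ne' h)
  have hk : HahnSeries.order (toLaurent F ((u : F⟦X⟧) * (X : F⟦X⟧) ^ k)) = k := by
    refine le_antisymm (HahnSeries.order_le_of_coeff_ne_zero ?_)
      ((HahnSeries.le_order_iff_forall h0).2 fun j hj => ?_)
    · rw [LaurentSeries.coeff_coe_powerSeries, PowerSeries.coeff_mul_X_pow', if_pos le_rfl,
        Nat.sub_self, PowerSeries.coeff_zero_eq_constantCoeff]
      exact ((u.isUnit).map PowerSeries.constantCoeff).ne_zero
    · rcases lt_or_ge j 0 with hj0 | hj0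
      · exact (LaurentSeries.valuation_le_iff_coeff_lt_eq_zero F (D := 0)).1
          (by rw [neg_zero, WithZero.exp_zero]
              exact (LaurentSeries.val_le_one_iff_eq_coe F _).2 ⟨_, rfl⟩) j hj0
      · lift j to ℕ using hj0
        rw [LaurentSeries.coeff_coe_powerSeries, PowerSeries.coeff_mul_X_pow',
          if_neg (by omega)]
  have : k = n := by
    have := hk.symm.trans hord
    exact_mod_cast this
  exact ⟨u, by rw [this]⟩

/-- The increasing enumeration of the elements of an `i`-element subset of `Fin d`. -/
def rowsOf {d i : ℕ} (I : {I : Finset (Fin d) // I.card = i}) : Fin i → Fin d :=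
  fun a => ((I.1.orderIsoOfFin I.2 a : {x // x ∈ I.1}) : Fin d)

lemma rowsOf_injective {d i : ℕ} (I : {I : Finset (Fin d) // I.card = i}) :
    Function.Injective (rowsOf I) :=
  fun _ _ h => (I.1.orderIsoOfFin I.2).injective (Subtype.ext h)

lemma minor_map {d i : ℕ} [Fintype F] (f : Matrix (Fin d) (Fin i) F⟦X⟧)
    (I : {I : Finset (Fin d) // I.card = i}) :
    minor F (f.map (toLaurent F)) I = toLaurent F (f.submatrix (rowsOf I) id).det := by
  rw [RingHom.map_det]
  rfl

/-- A common divisor of the minors with increasing row selections divides the determinant for every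
row selection: a repeated row gives `0`, and otherwise the order of the rows affects only the
sign. -/
lemma dvd_det_submatrix {R : Type*} [CommRing R] {d i : ℕ} {c : R} (f : Matrix (Fin d) (Fin i) R)
    (h : ∀ I, c ∣ (f.submatrix (rowsOf I) id).det) (J : Fin i → Fin d) :
    c ∣ (f.submatrix J id).det := by
  by_cases hJ : Function.Injective J
  · let I : {I : Finset (Fin d) // I.card = i} :=
      ⟨Finset.univ.image J, by rw [Finset.card_image_of_injective _ hJ, Finset.card_fin]⟩
    let σ : Fin i → Fin i := fun a =>
      (I.1.orderIsoOfFin I.2).symm ⟨J a, Finset.mem_image_of_mem _ (Finset.mem_univ _)⟩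
    have hσ : ∀ a, rowsOf I (σ a) = J a := fun a => by simp [rowsOf, σ]
    have hinj : Function.Injective σ := fun a b hab => hJ (by rw [← hσ, ← hσ, hab])
    let τ : Equiv.Perm (Fin i) := Equiv.ofBijective σ (Finite.injective_iff_bijective.1 hinj)
    have e : f.submatrix J id = (f.submatrix (rowsOf I) id).submatrix τ id := by
      ext a b
      exact congrArg (fun r => f r b) (hσ a).symm
    rw [e, Matrix.det_permute]
    exact Dvd.dvd.mul_left (h I) _
  · obtain ⟨a, b, hab, hne⟩ : ∃ a b, J a = J b ∧ a ≠ b := by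
      simpa [Function.Injective] using hJ
    rw [Matrix.det_zero_of_row_eq hne (by ext c; simp [hab])]
    exact dvd_zero _

end Minors

/-! ### Residue classes modulo `X ^ M` and their measure -/

section ResidueClasses
variable {F : Type*} [Field F] {d i : ℕ}

/-- The set of integral matrices over `K` that reduce to `a` modulo `X ^ M`. -/
def residueClass (M : ℕ) (a : Matrix (Fin d) (Fin i) (TruncRing F M)) :
    Set (Matrix (Fin d) (Fin i) (LaurentSeries F)) :=
  {s | ∃ f : Matrix (Fin d) (Fin i) F⟦X⟧, f.map (toLaurent F) = s ∧ f.map (TruncRing.mk F M) = a}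

lemma map_toLaurent_injective :
    Function.Injective fun f : Matrix (Fin d) (Fin i) F⟦X⟧ => f.map (toLaurent F) :=
  Matrix.map_injective HahnSeries.ofPowerSeries_injective

lemma isOpen_residueClass_zero (M : ℕ) :
    IsOpen (residueClass M (0 : Matrix (Fin d) (Fin i) (TruncRing F M))) := by
  have e : residueClass M (0 : Matrix (Fin d) (Fin i) (TruncRing F M)) =
      ⋂ a, ⋂ b, (fun s : Matrix (Fin d) (Fin i) (LaurentSeries F) => s a b) ⁻¹'
        {x | Valued.v x ≤ WithZero.exp (-(M : ℤ))} := by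
    ext s
    simp only [valuation_le_eq_image, Set.mem_iInter, Set.mem_preimage]
    constructor
    · rintro ⟨f, rfl, hf⟩ a b
      exact ⟨f a b, TruncRing.mk_eq_zero.1 (congrFun (congrFun hf a) b), rfl⟩
    · intro h
      choose f hf hfs using h
      refine ⟨Matrix.of f, Matrix.ext hfs, Matrix.ext fun a b => TruncRing.mk_eq_zero.2 (hf a b)⟩
  rw [e]
  exact isOpen_iInter_of_finite fun a => isOpen_iInter_of_finite fun b =>
    (isOpen_valuation_le M).preimage (continuous_id.matrix_elem a b)

lemma residueClass_eq_preimage (M : ℕ) (f : Matrix (Fin d) (Fin i) F⟦X⟧) :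
    residueClass M (f.map (TruncRing.mk F M)) =
      (fun s => -f.map (toLaurent F) + s) ⁻¹' residueClass M 0 := by
  have hs : ∀ f g : Matrix (Fin d) (Fin i) F⟦X⟧,
      (g - f).map (toLaurent F) = -f.map (toLaurent F) + g.map (toLaurent F) := by
    intro f g
    ext1 a b
    simp only [Matrix.map_apply, Matrix.sub_apply, Matrix.add_apply, Matrix.neg_apply, map_sub]
    ring
  have hr : ∀ f g : Matrix (Fin d) (Fin i) F⟦X⟧, (g - f).map (TruncRing.mk F M) =
      g.map (TruncRing.mk F M) - f.map (TruncRing.mk F M) := by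
    intro f g
    ext1 a b
    simp only [Matrix.map_apply, Matrix.sub_apply, map_sub]
  ext s
  constructor
  · rintro ⟨g, rfl, hg⟩
    exact ⟨g - f, hs f g, by rw [hr, hg, sub_self]⟩
  · rintro ⟨g, hg, hg0⟩
    have e := hr f (f + g)
    rw [add_sub_cancel_left, hg0] at e
    refine ⟨f + g, ?_, (sub_eq_zero.1 e.symm)⟩
    have e' := hs f (f + g)
    rw [add_sub_cancel_left, hg] at e'
    exact (add_left_cancel e').symm

lemma measure_residueClass [Fintype F] (μ : Measure (Matrix (Fin d) (Fin i) (LaurentSeries F)))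
    (hinv : ∀ a, μ.map (fun s => a + s) = μ) (M : ℕ)
    (a : Matrix (Fin d) (Fin i) (TruncRing F M)) :
    MeasurableSet (residueClass M a) ∧
      μ (residueClass M a) = μ (residueClass M (0 : Matrix (Fin d) (Fin i) (TruncRing F M))) := by
  have : BorelSpace (Matrix (Fin d) (Fin i) (LaurentSeries F)) := ⟨rfl⟩
  obtain ⟨f, rfl⟩ : ∃ f : Matrix (Fin d) (Fin i) F⟦X⟧, f.map (TruncRing.mk F M) = a := by
    choose f hf using fun k l => Ideal.Quotient.mk_surjective (a k l)
    exact ⟨Matrix.of f, Matrix.ext hf⟩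
  have hm : Measurable fun s => -f.map (toLaurent F) + s :=
    (continuous_const.add continuous_id).measurable
  have h0 := (isOpen_residueClass_zero (F := F) (d := d) (i := i) M).measurableSet
  rw [residueClass_eq_preimage]
  refine ⟨hm h0, ?_⟩
  rw [← Measure.map_apply hm h0, hinv]

lemma disjoint_residueClass (M : ℕ) :
    Pairwise (Function.onFun Disjoint
      (residueClass M : Matrix (Fin d) (Fin i) (TruncRing F M) → _)) := by
  intro a b hab
  refine Set.disjoint_left.2 ?_
  rintro s ⟨f, hf, rfl⟩ ⟨g, hg, rfl⟩
  exact hab (by rw [map_toLaurent_injective (hf.trans hg.symm)])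

/-- The `q ^ (M d i)` residue classes have equal measure and fill up the integral matrices, so a set
meeting only the classes in `S` has measure at most `#S / q ^ (M d i)`. -/
lemma measure_mul_le_card [Fintype F] (μ : Measure (Matrix (Fin d) (Fin i) (LaurentSeries F)))
    (hinv : ∀ a, μ.map (fun s => a + s) = μ) (hnorm : μ (intMat F d i) = 1) (M : ℕ)
    {D : Set (Matrix (Fin d) (Fin i) (LaurentSeries F))}
    (S : Set (Matrix (Fin d) (Fin i) (TruncRing F M)))
    (hD : D ⊆ ⋃ a ∈ S, residueClass M a) :
    μ D * ((Fintype.card F ^ M) ^ (d * i) : ℕ) ≤ (Nat.card S : ℕ) := by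
  have := Fintype.ofFinite (Matrix (Fin d) (Fin i) (TruncRing F M))
  set U := μ (residueClass M (0 : Matrix (Fin d) (Fin i) (TruncRing F M))) with hU
  have hcard : Nat.card (Matrix (Fin d) (Fin i) (TruncRing F M)) =
      (Fintype.card F ^ M) ^ (d * i) := by
    change Nat.card (Fin d → Fin i → TruncRing F M) = _
    rw [Nat.card_fun, Nat.card_fun, (TruncRing.truncDVR F M).card_eq, Nat.card_fin, Nat.card_fin,
      ← pow_mul, mul_comm d i]
  have h1 : ((Fintype.card F ^ M) ^ (d * i) : ℕ) * U ≤ 1 := by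
    have e := measure_iUnion (μ := μ) (disjoint_residueClass (F := F) (d := d) (i := i) M)
      fun a => (measure_residueClass μ hinv M a).1
    simp only [(measure_residueClass μ hinv M _).2, ← hU, tsum_fintype, Finset.sum_const,
      Finset.card_univ, nsmul_eq_mul] at e
    rw [← Nat.card_eq_fintype_card, hcard] at e
    rw [← e, ← hnorm]
    refine measure_mono (Set.iUnion_subset fun a => ?_)
    rintro s ⟨f, rfl, -⟩ k l
    exact absv_le_one_iff.2 ⟨f k l, rfl⟩
  have h2 : μ D ≤ (Nat.card S : ℕ) * U := by
    refine (measure_mono hD).trans ((measure_biUnion_le _ (Set.to_countable S) _).trans ?_)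
    simp only [(measure_residueClass μ hinv M _).2, ← hU, tsum_fintype, Finset.sum_const,
      Finset.card_univ, nsmul_eq_mul, ← Nat.card_eq_fintype_card]
    exact le_rfl
  calc _ ≤ (Nat.card S : ℕ) * U * ((Fintype.card F ^ M) ^ (d * i) : ℕ) := by gcongr
    _ = (Nat.card S : ℕ) * (((Fintype.card F ^ M) ^ (d * i) : ℕ) * U) := by ring
    _ ≤ (Nat.card S : ℕ) * 1 := by gcongr
    _ = _ := mul_one _

/-- The reductions modulo `X ^ M` of the matrices with prescribed absolute values of the minors are
among the matrices counted by `TruncDVR.card_le`, provided that the minor with rows `I₁` has the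
largest absolute value. -/
lemma map_mk_mem [Fintype F] {f : Matrix (Fin d) (Fin i) F⟦X⟧}
    {nn : {I : Finset (Fin d) // I.card = i} → ℕ}
    (hf : ∀ I, absv F (minor F (f.map (toLaurent F)) I) = (Fintype.card F : ℝ) ^ (-(nn I : ℤ)))
    (I₀ : {I : Finset (Fin d) // I.card = i}) {I₁ : {I : Finset (Fin d) // I.card = i}}
    (hmin : ∀ I, nn I₁ ≤ nn I) (M : ℕ) :
    (∃ u : (TruncRing F M)ˣ, ((f.map (TruncRing.mk F M)).submatrix (rowsOf I₁) id).det =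
        u * TruncRing.mk F M X ^ nn I₁) ∧
      ∃ t ∈ TruncDVR.normalized (TruncRing.mk F M X) (rowsOf I₀) (rowsOf I₁) (nn I₀ - nn I₁),
        f.map (TruncRing.mk F M) = t * (f.map (TruncRing.mk F M)).submatrix (rowsOf I₁) id := by
  have hdet : ∀ I, ∃ u : F⟦X⟧ˣ,
      (f.submatrix (rowsOf I) id).det = (u : F⟦X⟧) * (X : F⟦X⟧) ^ nn I :=
    fun I => eq_unit_mul_of_absv (by rw [← minor_map]; exact hf I)
  obtain ⟨u, hu⟩ := hdet I₁
  obtain ⟨u₀, hu₀⟩ := hdet I₀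
  obtain ⟨t, ht1, ht⟩ := exists_mul_of_dvd_minors f (rowsOf I₁) hu
    (dvd_det_submatrix f fun I => by
      obtain ⟨v, hv⟩ := hdet I
      rw [hv]
      exact Dvd.dvd.mul_left (pow_dvd_pow _ (hmin I)) _)
  have hmapdet : ∀ (g : Matrix (Fin d) (Fin i) F⟦X⟧) (J : Fin i → Fin d),
      ((g.map (TruncRing.mk F M)).submatrix J id).det =
        TruncRing.mk F M (g.submatrix J id).det := by
    intro g J
    rw [RingHom.map_det]
    rfl
  refine ⟨⟨Units.map (TruncRing.mk F M).toMonoidHom u, ?_⟩, t.map (TruncRing.mk F M), ⟨?_, ?_⟩, ?_⟩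
  · rw [hmapdet, hu, map_mul, map_pow]
    rfl
  · rw [Matrix.submatrix_map, ht1]
    exact Matrix.map_one _ (map_zero _) (map_one _)
  · rw [hmapdet, ← map_pow]
    refine map_dvd _ ?_
    have h1 : (X : F⟦X⟧) ^ nn I₁ * X ^ (nn I₀ - nn I₁) ∣
        X ^ nn I₁ * (t.submatrix (rowsOf I₀) id).det := by
      rw [← pow_add, Nat.add_sub_cancel' (hmin I₀), ← u.isUnit.dvd_mul_left, ← mul_assoc, ← hu,
        mul_comm, ← Matrix.det_mul, ← TruncDVR.submatrix_mul_left, ← ht, hu₀]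
      exact dvd_mul_left _ _
    exact (mul_dvd_mul_iff_left (pow_ne_zero _ PowerSeries.X_ne_zero)).1 h1
  · conv_lhs => rw [ht]
    rw [Matrix.map_mul, Matrix.submatrix_map]

end ResidueClasses

end

/-! ### The measure of `D` -/

/-- **Lemma 3.4.** For `1 ≤ i ≤ d` there is `C > 0` such that for every family `(n_I)` of
nonnegative integers indexed by the `i`-element subsets `I` of `{1, …, d}`, there exists an
`i`-element subset `I'` with `μ_{di}(D) ≤ C q^{-max_I n_I - (d-i) n_{I'}}`, where
`D = {s ∈ M_{d,i}(𝒪) : |c_I(s)| = q^{-n_I} for every I}` and `c_I(s)` is the `i × i` minor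
of `s` with row set `I`; `μ_{di}` is the additive Haar measure normalized so that
`μ_{di}(M_{d,i}(𝒪)) = 1`. -/
theorem stmt4 (F : Type*) [Field F] [Fintype F] (d i : ℕ) (hi : 1 ≤ i) (hid : i ≤ d)
    (μ : MeasureTheory.Measure (Matrix (Fin d) (Fin i) (LaurentSeries F)))
    (hinv : ∀ a, μ.map (fun s => a + s) = μ)
    (hnorm : μ (intMat F d i) = 1) :
    ∃ C : ℝ, 0 < C ∧ ∀ nn : {I : Finset (Fin d) // I.card = i} → ℕ,
      ∃ I' : {I : Finset (Fin d) // I.card = i},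
        μ {s ∈ intMat F d i |
            ∀ I : {I : Finset (Fin d) // I.card = i},
              absv F (minor F s I) = (Fintype.card F : ℝ) ^ (-(nn I : ℤ))}
          ≤ ENNReal.ofReal (C * (Fintype.card F : ℝ) ^
              (-((Finset.univ.sup nn : ℕ) : ℤ) - (d - i : ℕ) * (nn I' : ℤ))) := by
  obtain ⟨k, rfl⟩ : ∃ k, i = k + 1 := ⟨i - 1, by omega⟩
  set q := Fintype.card F with hq
  have hq0 : (0 : ℝ) < q := by
    rw [hq]
    exact_mod_cast Fintype.card_pos
  refine ⟨4 ^ k * (q : ℝ) ^ ((k + 1) * (k + 1)), by positivity, fun nn => ?_⟩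
  obtain ⟨J, hJ⟩ : ∃ J : Finset (Fin d), J.card = k + 1 := by
    obtain ⟨J, -, hJ⟩ := Finset.exists_subset_card_eq (s := (Finset.univ : Finset (Fin d)))
      (n := k + 1) (by simpa using hid)
    exact ⟨J, hJ⟩
  have hne : (Finset.univ : Finset {I : Finset (Fin d) // I.card = k + 1}).Nonempty :=
    ⟨⟨J, hJ⟩, Finset.mem_univ _⟩
  -- `I₁` gives the largest minor and serves as `I'`; `I₀` attains `max_I n_I`
  obtain ⟨I₁, -, hmin⟩ := Finset.exists_min_image _ nn hne
  obtain ⟨I₀, -, hmax⟩ := Finset.exists_mem_eq_sup _ hne nn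
  replace hmin : ∀ I, nn I₁ ≤ nn I := fun I => hmin I (Finset.mem_univ _)
  refine ⟨I₁, ?_⟩
  rw [hmax]
  -- any `M` that is positive and at least `max_I n_I` would do
  set M := nn I₀ + 1 with hM
  let S : Set (Matrix (Fin d) (Fin (k + 1)) (TruncRing F M)) := {s |
    (∃ u : (TruncRing F M)ˣ,
      (s.submatrix (rowsOf I₁) id).det = u * TruncRing.mk F M PowerSeries.X ^ nn I₁) ∧
      ∃ t ∈ TruncDVR.normalized (TruncRing.mk F M PowerSeries.X) (rowsOf I₀) (rowsOf I₁)
        (nn I₀ - nn I₁), s = t * s.submatrix (rowsOf I₁) id}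
  have hS : Nat.card S * q ^ (nn I₀ + (d - (k + 1)) * nn I₁) ≤
      4 ^ k * q ^ ((k + 1) * (k + 1)) * (q ^ M) ^ (d * (k + 1)) :=
    (TruncRing.truncDVR F M).card_le (by omega) (rowsOf_injective I₀) (rowsOf_injective I₁)
      (hmin I₀) (by omega)
  have hD := measure_mul_le_card μ hinv hnorm M S
    (D := {s ∈ intMat F d (k + 1) | ∀ I : {I : Finset (Fin d) // I.card = k + 1},
      absv F (minor F s I) = (q : ℝ) ^ (-(nn I : ℤ))}) (by
    rintro s ⟨hs, hsI⟩
    choose f hf using fun a b => absv_le_one_iff.1 (hs a b)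
    obtain rfl : (Matrix.of f).map (toLaurent F) = s := Matrix.ext hf
    exact Set.mem_biUnion (map_mk_mem hsI I₀ hmin M) ⟨Matrix.of f, rfl, rfl⟩)
  have hQ : (((q ^ M) ^ (d * (k + 1)) : ℕ) : ℝ≥0∞) ≠ 0 := by
    have : 0 < q := by exact_mod_cast hq0
    exact_mod_cast (by positivity : (q ^ M) ^ (d * (k + 1)) ≠ 0)
  refine ((ENNReal.le_div_iff_mul_le (Or.inl hQ) (Or.inl (ENNReal.natCast_ne_top _))).2 hD).trans ?_
  refine ENNReal.div_le_of_le_mul ?_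
  rw [← ENNReal.ofReal_natCast, ← ENNReal.ofReal_natCast,
    ← ENNReal.ofReal_mul (by positivity)]
  refine ENNReal.ofReal_le_ofReal ?_
  have e : (q : ℝ) ^ (-((nn I₀ : ℕ) : ℤ) - (d - (k + 1) : ℕ) * (nn I₁ : ℤ)) =
      ((q : ℝ) ^ (nn I₀ + (d - (k + 1)) * nn I₁))⁻¹ := by
    rw [← zpow_natCast, ← zpow_neg]
    congr 1
    push_cast
    ring
  have hS' : (Nat.card S : ℝ) * (q : ℝ) ^ (nn I₀ + (d - (k + 1)) * nn I₁) ≤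
      4 ^ k * (q : ℝ) ^ ((k + 1) * (k + 1)) * (((q ^ M) ^ (d * (k + 1)) : ℕ) : ℝ) := by
    exact_mod_cast hS
  rw [e, mul_right_comm, ← div_eq_mul_inv, le_div_iff₀ (by positivity)]
  exact hS'
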